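/- arXiv:1004.0680 — 3 statements merged into one kernel-verified Lean document; each statement's English description precedes it below -/
import Mathlib

section
/- Let H₁, H₂ ∈ (0,1) and α > 0 satisfy α − 4H₂ + H₁ + 2 > 0. Let B^{H₁} be a fractional Brownian motion with Hurst parameter H₁, and for n ≥ 2 set T''_n = Σ_{0≤i≠j≤n−1} E[K(n^α B^{H₁}_i) K(n^α B^{H₁}_j)] · f_{H₂}(i,j). Then lim_{n→∞} n^{α+H₁−1} T''_n = 0. -/
open MeasureTheory ProbabilityTheory Filter Topology Real

/-- The standard Gaussian kernel `K(x) = (2π)^{-1/2} e^{-x²/2}`. -/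
noncomputable def K (x : ℝ) : ℝ := (Real.sqrt (2 * Real.pi))⁻¹ * Real.exp (-(x ^ 2) / 2)

/-- Covariance function of fractional Brownian motion with Hurst parameter `H`. -/
noncomputable def RH (H t s : ℝ) : ℝ :=
  (t ^ (2 * H) + s ^ (2 * H) - |t - s| ^ (2 * H)) / 2

/-- `f_{H₂}(i,j) = (1/2)(|i−j+1|^{2H₂} + |i−j−1|^{2H₂} − 2|i−j|^{2H₂})`,
the covariance of two unit increments of fBm with Hurst parameter `H₂`. -/
noncomputable def fH (H₂ : ℝ) (i j : ℕ) : ℝ :=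
  (|(i : ℝ) - j + 1| ^ (2 * H₂) + |(i : ℝ) - j - 1| ^ (2 * H₂)
    - 2 * |(i : ℝ) - j| ^ (2 * H₂)) / 2

/-- `B` is a fractional Brownian motion with Hurst parameter `H` on `(Ω, μ)`:
a centered Gaussian process, starting from `0`, with covariance `R_H`. -/
structure IsFBM {Ω : Type*} [MeasurableSpace Ω] (μ : Measure Ω) (H : ℝ)
    (B : ℝ → Ω → ℝ) : Prop where
  meas : ∀ t : ℝ, Measurable (B t)
  zero : ∀ᵐ ω ∂μ, B 0 ω = 0
  gaussian : ∀ (n : ℕ) (t : Fin n → ℝ) (c : Fin n → ℝ), (∀ i, 0 ≤ t i) →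
    ∃ v : NNReal, μ.map (fun ω => ∑ i, c i * B (t i) ω) = gaussianReal 0 v
  cov : ∀ s t : ℝ, 0 ≤ s → 0 ≤ t → ∫ ω, B s ω * B t ω ∂μ = RH H s t


lemma gauss_one (v : NNReal) (hv : v ≠ 0) (m c : ℝ) (hm : 0 < m) :
    ∫ y, Real.exp (-((m * (y + c)) ^ 2) / 2) ∂(gaussianReal 0 v) ≤ 1 / (m * Real.sqrt v) := by
  have hv' : (0 : ℝ) < v := by positivity
  rw [integral_gaussianReal_eq_integral_smul hv]
  have hint : Integrable (fun y : ℝ => Real.exp (-(m ^ 2 / 2) * y ^ 2)) :=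
    integrable_exp_neg_mul_sq (by positivity)
  have hint2 : Integrable (fun y : ℝ => Real.exp (-(m ^ 2 / 2) * (y + c) ^ 2)) :=
    hint.comp_add_right c
  have hI : ∫ y : ℝ, Real.exp (-(m ^ 2 / 2) * (y + c) ^ 2) = Real.sqrt (π / (m ^ 2 / 2)) := by
    rw [integral_add_right_eq_self (fun y : ℝ => Real.exp (-(m ^ 2 / 2) * y ^ 2)) c]
    exact integral_gaussian _
  calc ∫ x, gaussianPDFReal 0 v x • Real.exp (-((m * (x + c)) ^ 2) / 2)
      ≤ ∫ x, (Real.sqrt (2 * π * v))⁻¹ * Real.exp (-(m ^ 2 / 2) * (x + c) ^ 2) := by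
        apply integral_mono_of_nonneg
        · exact ae_of_all _ fun x => by
            simp only [Pi.zero_apply, smul_eq_mul]
            exact mul_nonneg (gaussianPDFReal_nonneg _ _ _) (Real.exp_pos _).le
        · exact hint2.const_mul _
        · refine ae_of_all _ fun x => ?_
          simp only [smul_eq_mul, gaussianPDFReal]
          have e : -((m * (x + c)) ^ 2) / 2 = -(m ^ 2 / 2) * (x + c) ^ 2 := by ring
          rw [e]
          apply mul_le_mul_of_nonneg_right _ (Real.exp_pos _).le
          apply mul_le_of_le_one_right (by positivity)
          apply Real.exp_le_one_iff.2
          apply div_nonpos_of_nonpos_of_nonneg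
          · nlinarith [sq_nonneg (x - 0)]
          · positivity
    _ = 1 / (m * Real.sqrt v) := by
        rw [integral_const_mul, hI]
        have h1 : π / (m ^ 2 / 2) = (2 * π) / m ^ 2 := by field_simp
        rw [h1, Real.sqrt_div (by positivity), Real.sqrt_sq hm.le, Real.sqrt_mul (by positivity)]
        have : Real.sqrt (2 * π) ≠ 0 := by positivity
        have : Real.sqrt (v : ℝ) ≠ 0 := by positivity
        field_simp

lemma gauss_sq {Ω : Type*} [MeasurableSpace Ω] (μ : Measure Ω) (X : Ω → ℝ) (hX : Measurable X)
    (v : NNReal) (h : μ.map X = gaussianReal 0 v) : MemLp X 2 μ ∧ ∫ ω, X ω ∂μ = 0 ∧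
      ∫ ω, X ω * X ω ∂μ = v := by
  have hm : MemLp id 2 (μ.map X) := by rw [h]; exact memLp_id_gaussianReal 2
  have h2 : MemLp X 2 μ := (memLp_map_measure_iff hm.1 hX.aemeasurable).1 hm
  refine ⟨h2, ?_, ?_⟩
  · have := integral_map hX.aemeasurable (μ := μ) (f := fun x : ℝ => x) (by fun_prop)
    rw [← this, h, integral_id_gaussianReal]
  · have := integral_map hX.aemeasurable (μ := μ) (f := fun x : ℝ => x * x) (by fun_prop)
    rw [← this, h]
    have hv := variance_id_gaussianReal (μ := 0) (v := v)
    rw [variance_eq_integral (by fun_prop)] at hv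
    simpa [pow_two] using hv

lemma gauss_single {Ω : Type*} [MeasurableSpace Ω] (μ : Measure Ω) (X : Ω → ℝ)
    (hX : Measurable X) (v : NNReal) (h : μ.map X = gaussianReal 0 v) (m : ℝ) (hm : 0 < m)
    (ha : 0 < ∫ ω, X ω * X ω ∂μ) :
    ∫ ω, Real.exp (-((m * X ω) ^ 2) / 2) ∂μ ≤ 1 / (m * Real.sqrt (∫ ω, X ω * X ω ∂μ)) := by
  obtain ⟨-, -, h3⟩ := gauss_sq μ X hX v h
  rw [h3] at ha ⊢
  have := integral_map hX.aemeasurable (μ := μ) (f := fun x : ℝ => Real.exp (-((m * x) ^ 2) / 2))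
    (by fun_prop)
  rw [← this, h]
  simpa using gauss_one v (by rintro rfl; simp at ha) m 0 hm

lemma gauss_pair {Ω : Type*} [MeasurableSpace Ω] (μ : Measure Ω) [IsProbabilityMeasure μ]
    (X Y : Ω → ℝ) (hX : Measurable X) (hY : Measurable Y)
    (h : ∀ c d : ℝ, ∃ v : NNReal, μ.map (fun ω => c * X ω + d * Y ω) = gaussianReal 0 v)
    (m a b d : ℝ) (hm : 0 < m) (ha : ∫ ω, X ω * X ω ∂μ = a) (hb : ∫ ω, X ω * Y ω ∂μ = b)
    (hd : ∫ ω, Y ω * Y ω ∂μ = d) (ha0 : 0 < a) (hdet : 0 < a * d - b ^ 2) :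
    ∫ ω, Real.exp (-((m * X ω) ^ 2) / 2) * Real.exp (-((m * Y ω) ^ 2) / 2) ∂μ
      ≤ 1 / (m ^ 2 * Real.sqrt (a * d - b ^ 2)) := by
  set r := b / a with hr
  obtain ⟨v, hv⟩ := h 1 0
  obtain ⟨u, hu⟩ := h 0 1
  obtain ⟨w, hw⟩ := h (-r) 1
  simp only [one_mul, zero_mul, add_zero, zero_add] at hv hu hw
  set Z : Ω → ℝ := fun ω => -r * X ω + Y ω with hZdef
  have hZ : Measurable Z := by fun_prop
  obtain ⟨hX2, hX1, hXv⟩ := gauss_sq μ X hX v hv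
  obtain ⟨hY2, hY1, hYv⟩ := gauss_sq μ Y hY u hu
  obtain ⟨hZ2, hZ1, hZv⟩ := gauss_sq μ Z hZ w hw
  have iXX : Integrable (fun ω => X ω * X ω) μ := hX2.integrable_mul hX2
  have iXY : Integrable (fun ω => X ω * Y ω) μ := hX2.integrable_mul hY2
  have iYY : Integrable (fun ω => Y ω * Y ω) μ := hY2.integrable_mul hY2
  have hXZ : ∫ ω, X ω * Z ω ∂μ = 0 := by
    have : ∀ ω, X ω * Z ω = -r * (X ω * X ω) + X ω * Y ω := fun ω => by simp only [hZdef]; ring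
    simp_rw [this]
    rw [integral_add (iXX.const_mul _) iXY, integral_const_mul, ha, hb, hr]
    field_simp; ring
  have hw' : (w : ℝ) = (a * d - b ^ 2) / a := by
    rw [← hZv]
    have : ∀ ω, Z ω * Z ω = r ^ 2 * (X ω * X ω) + (-2 * r) * (X ω * Y ω) + Y ω * Y ω :=
      fun ω => by simp only [hZdef]; ring
    simp_rw [this]
    have i3 : Integrable (fun ω => r ^ 2 * (X ω * X ω) + (-2 * r) * (X ω * Y ω)) μ :=
      (iXX.const_mul _).add (iXY.const_mul _)
    rw [integral_add i3 iYY,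
      integral_add (iXX.const_mul _) (iXY.const_mul _), integral_const_mul, integral_const_mul,
      ha, hb, hd, hr]
    field_simp; ring
  have hva : (v : ℝ) = a := by rw [← hXv, ha]
  have hw0 : (0 : ℝ) < w := by rw [hw']; positivity
  have hw0' : w ≠ 0 := by rintro rfl; simp at hw0
  have hv0' : v ≠ 0 := by rintro rfl; simp at hva; linarith
  have hG : HasGaussianLaw (fun ω => (X ω, Z ω)) μ := by
    refine ⟨isGaussian_of_map_eq_gaussianReal fun L => ?_⟩
    obtain ⟨t, ht⟩ := h (L (1, 0) - r * L (0, 1)) (L (0, 1))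
    refine ⟨0, t, ?_⟩
    rw [Measure.map_map (by fun_prop) (by fun_prop), ← ht]
    congr 1
    ext ω
    have : (X ω, Z ω) = X ω • ((1 : ℝ), (0 : ℝ)) + Z ω • ((0 : ℝ), (1 : ℝ)) := by simp
    simp only [Function.comp]
    rw [this, map_add, map_smul, map_smul]
    simp only [hZdef, smul_eq_mul]; ring
  have hind : IndepFun X Z μ := by
    apply hG.indepFun_of_covariance_eq_zero
    rw [covariance_eq_sub hX2 hZ2, hX1]
    simpa using hXZ
  have hlaw := (indepFun_iff_map_prod_eq_prod_map_map hX.aemeasurable hZ.aemeasurable).1 hind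
  rw [hv, hw] at hlaw
  set F : ℝ × ℝ → ℝ := fun p =>
    Real.exp (-((m * p.1) ^ 2) / 2) * Real.exp (-((m * (p.2 + r * p.1)) ^ 2) / 2) with hF
  have hFm : Measurable F := by fun_prop
  have hle1 : ∀ x : ℝ, Real.exp (-(x ^ 2) / 2) ≤ 1 := fun x => by
    apply Real.exp_le_one_iff.2; nlinarith [sq_nonneg x]
  have hstart : ∫ ω, Real.exp (-((m * X ω) ^ 2) / 2) * Real.exp (-((m * Y ω) ^ 2) / 2) ∂μ
      = ∫ p, F p ∂((gaussianReal 0 v).prod (gaussianReal 0 w)) := by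
    rw [← hlaw, integral_map (by fun_prop) hFm.aestronglyMeasurable]
    congr 1; ext ω
    simp only [hF, hZdef]
    congr 4; ring
  have hFi : Integrable F ((gaussianReal 0 v).prod (gaussianReal 0 w)) := by
    apply Integrable.of_bound hFm.aestronglyMeasurable 1
    refine ae_of_all _ fun p => ?_
    rw [Real.norm_of_nonneg (by positivity)]
    exact mul_le_one₀ (hle1 _) (by positivity) (hle1 _)
  rw [hstart, integral_prod _ hFi]
  have hei : Integrable (fun x : ℝ => Real.exp (-((m * x) ^ 2) / 2)) (gaussianReal 0 v) := by
    apply Integrable.of_bound (by fun_prop) 1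
    refine ae_of_all _ fun p => ?_
    rw [Real.norm_of_nonneg (by positivity)]
    exact hle1 _
  calc ∫ x, ∫ y, F (x, y) ∂(gaussianReal 0 w) ∂(gaussianReal 0 v)
      ≤ ∫ x, Real.exp (-((m * x) ^ 2) / 2) * (1 / (m * Real.sqrt w)) ∂(gaussianReal 0 v) := by
        apply integral_mono_of_nonneg
        · exact ae_of_all _ fun x => integral_nonneg fun y => by simp only [hF]; positivity
        · exact hei.mul_const _
        · refine ae_of_all _ fun x => ?_
          simp only [hF]
          rw [integral_const_mul]
          exact mul_le_mul_of_nonneg_left (gauss_one w hw0' m (r * x) hm) (by positivity)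
    _ ≤ (1 / (m * Real.sqrt v)) * (1 / (m * Real.sqrt w)) := by
        rw [integral_mul_const]
        apply mul_le_mul_of_nonneg_right _ (by positivity)
        simpa using gauss_one v hv0' m 0 hm
    _ = 1 / (m ^ 2 * Real.sqrt (a * d - b ^ 2)) := by
        have : a * d - b ^ 2 = v * w := by rw [hva, hw']; field_simp
        rw [this, Real.sqrt_mul (by positivity)]
        have : Real.sqrt (v : ℝ) ≠ 0 := by rw [hva]; positivity
        have : Real.sqrt (w : ℝ) ≠ 0 := by positivity
        field_simp

lemma second_diff (p x : ℝ) (hp : 0 < p) (hp2 : p < 2) (hx0 : 0 < x) (hx1 : x ≤ 1) :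
    |(1 + x) ^ p + (1 - x) ^ p - 2| ≤ 2 * x ^ 2 := by
  have key : ∀ y : ℝ, -1 ≤ y → (1 + y) ^ p ≤ 1 + (p / 2) * (2 * y + y ^ 2) := by
    intro y hy
    have h1 : (1 + y) ^ p = (1 + (2 * y + y ^ 2)) ^ (p / 2) := by
      have : 1 + (2 * y + y ^ 2) = (1 + y) ^ (2 : ℝ) := by rw [Real.rpow_two]; ring
      rw [this, ← Real.rpow_mul (by linarith)]
      congr 1; ring
    rw [h1]
    exact rpow_one_add_le_one_add_mul_self (by nlinarith [sq_nonneg (1 + y)]) (by linarith)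
      (by linarith)
  have k1 := key x (by linarith)
  have k2 := key (-x) (by linarith)
  rw [← sub_eq_add_neg] at k2
  have hx2 := sq_nonneg x
  rw [abs_le]
  constructor
  · have q1 : 0 ≤ (1 + x) ^ (p / 2) := by positivity
    have q2 : 0 ≤ (1 - x) ^ (p / 2) := Real.rpow_nonneg (by linarith) _
    have e1 : (1 + x) ^ p = ((1 + x) ^ (p / 2)) ^ 2 := by
      rw [← Real.rpow_natCast, ← Real.rpow_mul (by linarith)]; congr 1; push_cast; ring
    have e2 : (1 - x) ^ p = ((1 - x) ^ (p / 2)) ^ 2 := by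
      rw [← Real.rpow_natCast, ← Real.rpow_mul (by linarith)]; congr 1; push_cast; ring
    have e3 : (1 + x) ^ (p / 2) * (1 - x) ^ (p / 2) = (1 - x ^ 2) ^ (p / 2) := by
      rw [← Real.mul_rpow (by linarith) (by linarith)]; congr 1; ring
    have e4 : 1 - x ^ 2 ≤ (1 - x ^ 2) ^ (p / 2) := by
      apply Real.self_le_rpow_of_le_one <;> nlinarith
    rw [e1, e2]
    nlinarith [sq_nonneg ((1 + x) ^ (p / 2) - (1 - x) ^ (p / 2))]
  · nlinarith

lemma fH_symm (H : ℝ) (i j : ℕ) : fH H i j = fH H j i := by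
  unfold fH
  rw [abs_sub_comm (i : ℝ) j, show (i : ℝ) - j + 1 = -((j : ℝ) - i - 1) by ring,
    show (i : ℝ) - j - 1 = -((j : ℝ) - i + 1) by ring, abs_neg, abs_neg]
  ring

lemma fH_bound (H : ℝ) (hH : 0 < H) (hH' : H < 1) (i k : ℕ) :
    |fH H i (i + (k + 1))| ≤ ((k : ℝ) + 1) ^ (2 * H - 2) := by
  rw [fH_symm]
  unfold fH
  push_cast
  have hk : (0 : ℝ) < (k : ℝ) + 1 := by positivity
  have hk1 : (1 : ℝ) ≤ (k : ℝ) + 1 := by linarith [Nat.cast_nonneg (α := ℝ) k]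
  set t : ℝ := (k : ℝ) + 1 with ht
  have hx1 : 1 / t ≤ 1 := by rw [div_le_one hk]; exact hk1
  have h0 := second_diff (2 * H) (1 / t) (by linarith) (by linarith) (by positivity) hx1
  rw [show (i : ℝ) + t - i = t by ring, abs_of_pos hk, abs_of_pos (by linarith : 0 < t + 1),
    abs_of_nonneg (by linarith : 0 ≤ t - 1)]
  have e1 : (t + 1) ^ (2 * H) = t ^ (2 * H) * (1 + 1 / t) ^ (2 * H) := by
    rw [← Real.mul_rpow hk.le (by positivity)]; congr 1; field_simp
  have e2 : (t - 1) ^ (2 * H) = t ^ (2 * H) * (1 - 1 / t) ^ (2 * H) := by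
    rw [← Real.mul_rpow hk.le (by linarith)]; congr 1; field_simp
  have e3 : t ^ (2 * H - 2) = t ^ (2 * H) * (1 / t) ^ 2 := by
    rw [Real.rpow_sub hk, Real.rpow_two]; field_simp
  rw [e1, e2, e3]
  have : (t ^ (2 * H) * (1 + 1 / t) ^ (2 * H) + t ^ (2 * H) * (1 - 1 / t) ^ (2 * H)
      - 2 * t ^ (2 * H)) / 2 = t ^ (2 * H) * (((1 + 1 / t) ^ (2 * H) + (1 - 1 / t) ^ (2 * H) - 2) / 2) := by
    ring
  rw [this, abs_mul, abs_of_pos (Real.rpow_pos_of_pos hk _), abs_div, abs_two]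
  apply mul_le_mul_of_nonneg_left _ (by positivity)
  linarith

lemma det_aux (H s t : ℝ) (hH : 0 < H) (hH' : H < 1) (hs : 0 < s) (hst : s ≤ t) :
    (1 - H) / 4 * (t ^ (2 * H) * s ^ (2 * H)) ≤
      t ^ (2 * H) * s ^ (2 * H) - ((t + s) ^ (2 * H) - t ^ (2 * H) - s ^ (2 * H)) ^ 2 / 4 := by
  have ht : 0 < t := by linarith
  have sqr : ∀ y : ℝ, 0 < y → y ^ (2 * H) = (y ^ H) ^ 2 := fun y hy => by
    rw [← Real.rpow_natCast, ← Real.rpow_mul hy.le]; congr 1; push_cast; ring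
  rw [sqr t ht, sqr s hs, sqr (t + s) (by linarith)]
  have hc : t ^ H ≤ (t + s) ^ H := Real.rpow_le_rpow ht.le (by linarith) hH.le
  have hba : s ^ H ≤ t ^ H := Real.rpow_le_rpow hs.le hst hH.le
  have hb0 : 0 < s ^ H := Real.rpow_pos_of_pos hs _
  have hcb : (t + s) ^ H ≤ t ^ H + H * s ^ H := by
    have e1 : (t + s) ^ H = t ^ H * (1 + s / t) ^ H := by
      rw [← Real.mul_rpow ht.le (by positivity)]; congr 1; field_simp
    have e2 : (1 + s / t) ^ H ≤ 1 + H * (s / t) :=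
      rpow_one_add_le_one_add_mul_self (by have : 0 < s / t := by positivity
                                           linarith) hH.le hH'.le
    have e3 : s / t ≤ (s / t) ^ H :=
      Real.self_le_rpow_of_le_one (by positivity) ((div_le_one ht).2 hst) hH'.le
    rw [Real.div_rpow hs.le ht.le] at e3
    have hta : 0 < t ^ H := Real.rpow_pos_of_pos ht _
    calc (t + s) ^ H = t ^ H * (1 + s / t) ^ H := e1
      _ ≤ t ^ H * (1 + H * (s ^ H / t ^ H)) := by
        apply mul_le_mul_of_nonneg_left _ hta.le
        nlinarith
      _ = _ := by field_simp
  set a := t ^ H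
  set b := s ^ H
  set c := (t + s) ^ H
  have f1 : a * b ≤ c ^ 2 - (a - b) ^ 2 := by nlinarith
  have f2 : (1 - H) * (a * b) ≤ (a + b) ^ 2 - c ^ 2 := by
    have : (a + b) ^ 2 - c ^ 2 = (a + b - c) * (a + b + c) := by ring
    rw [this]
    calc (1 - H) * (a * b) = ((1 - H) * b) * a := by ring
      _ ≤ _ := mul_le_mul (by linarith) (by linarith) (by linarith) (by nlinarith)
  have f3 : ((1 - H) * (a * b)) * (a * b) ≤ ((a + b) ^ 2 - c ^ 2) * (c ^ 2 - (a - b) ^ 2) := by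
    have : 0 < a * b := mul_pos (by linarith) hb0
    have h1 : 0 ≤ (1 - H) * (a * b) := mul_nonneg (by linarith) this.le
    exact mul_le_mul f2 f1 this.le (h1.trans f2)
  nlinarith

lemma det_bound (H s t : ℝ) (hH : 0 < H) (hH' : H < 1) (hs : 0 < s) (ht : 0 < t) :
    (1 - H) / 4 * (t ^ (2 * H) * s ^ (2 * H)) ≤
      RH H t t * RH H (t + s) (t + s) - RH H t (t + s) ^ 2 := by
  have key : (1 - H) / 4 * (t ^ (2 * H) * s ^ (2 * H)) ≤
      t ^ (2 * H) * s ^ (2 * H) - ((t + s) ^ (2 * H) - t ^ (2 * H) - s ^ (2 * H)) ^ 2 / 4 := by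
    rcases le_total s t with h | h
    · exact det_aux H s t hH hH' hs h
    · have := det_aux H t s hH hH' ht h
      rw [add_comm s t] at this
      linarith
  refine key.trans (le_of_eq ?_)
  unfold RH
  have : |t - (t + s)| = s := by rw [show t - (t + s) = -s by ring, abs_neg, abs_of_pos hs]
  rw [this]
  simp only [sub_self, abs_zero]
  rw [Real.zero_rpow (by positivity)]
  ring

lemma sum_rpow_bound (δ : ℝ) (h0 : 0 < δ) (h1 : δ ≤ 1) (n : ℕ) :
    ∑ k ∈ Finset.range n, ((k : ℝ) + 1) ^ (δ - 1) ≤ (n : ℝ) ^ δ / δ := by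
  induction n with
  | zero => simp [Real.zero_rpow h0.ne']
  | succ n ih =>
    rw [Finset.sum_range_succ]
    push_cast
    have hk : (0 : ℝ) < (n : ℝ) + 1 := by positivity
    have hk1 : (1 : ℝ) ≤ (n : ℝ) + 1 := by linarith [Nat.cast_nonneg (α := ℝ) n]
    have hx1 : 1 / ((n : ℝ) + 1) ≤ 1 := by rw [div_le_one hk]; exact hk1
    have e1 : (n : ℝ) ^ δ = ((n : ℝ) + 1) ^ δ * (1 + -(1 / ((n : ℝ) + 1))) ^ δ := by
      rw [← Real.mul_rpow hk.le (by linarith)]; congr 1; field_simp; ring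
    have e2 := rpow_one_add_le_one_add_mul_self (s := -(1 / ((n : ℝ) + 1))) (by linarith) h0.le h1
    have e3 : ((n : ℝ) + 1) ^ (δ - 1) = ((n : ℝ) + 1) ^ δ * (1 / ((n : ℝ) + 1)) := by
      rw [Real.rpow_sub_one hk.ne']; ring
    have e4 : (n : ℝ) ^ δ ≤ ((n : ℝ) + 1) ^ δ * (1 + δ * -(1 / ((n : ℝ) + 1))) := by
      rw [e1]; exact mul_le_mul_of_nonneg_left e2 (by positivity)
    rw [le_div_iff₀ h0] at ih ⊢
    rw [add_mul, e3]
    nlinarith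

lemma K_nonneg (x : ℝ) : 0 ≤ K x := by unfold K; positivity

lemma K_le (x : ℝ) : K x ≤ Real.exp (-(x ^ 2) / 2) := by
  unfold K
  apply mul_le_of_le_one_left (Real.exp_pos _).le
  apply inv_le_one_of_one_le₀
  rw [Real.one_le_sqrt]
  nlinarith [Real.pi_gt_three]

lemma exp_sq_le (x : ℝ) : Real.exp (-(x ^ 2) / 2) ≤ 1 := by
  apply Real.exp_le_one_iff.2; nlinarith [sq_nonneg x]

lemma RH_self (H t : ℝ) (hH : 0 < H) : RH H t t = t ^ (2 * H) := by
  unfold RH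
  simp only [sub_self, abs_zero]
  rw [Real.zero_rpow (by positivity)]; ring

lemma sqrt_rpow_two_mul (H t : ℝ) (ht : 0 < t) : Real.sqrt (t ^ (2 * H)) = t ^ H := by
  rw [show t ^ (2 * H) = (t ^ H) ^ 2 by
    rw [← Real.rpow_natCast, ← Real.rpow_mul ht.le]; congr 1; push_cast; ring]
  exact Real.sqrt_sq (by positivity)

lemma KK_zero {Ω : Type*} [MeasurableSpace Ω] (μ : Measure Ω) [IsProbabilityMeasure μ]
    (H : ℝ) (hH : 0 < H) (B : ℝ → Ω → ℝ) (hB : IsFBM μ H B) (m s t : ℝ) (hm : 0 < m)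
    (ht : 0 < t) :
    ∫ ω, K (m * B s ω) * K (m * B t ω) ∂μ ≤ 1 / m * t ^ (-H) := by
  have mt := hB.meas t
  obtain ⟨v, hv⟩ := hB.gaussian 1 (fun _ => t) (fun _ => 1) (fun _ => ht.le)
  simp only [Finset.univ_unique, one_mul, Finset.sum_const, Finset.card_singleton, one_smul] at hv
  have hc := hB.cov t t ht.le ht.le
  rw [RH_self H t hH] at hc
  have h1 := gauss_single μ (B t) mt v hv m hm (by rw [hc]; positivity)
  rw [hc, sqrt_rpow_two_mul H t ht] at h1
  calc _ ≤ ∫ ω, Real.exp (-((m * B t ω) ^ 2) / 2) ∂μ := by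
        apply integral_mono_of_nonneg
        · exact ae_of_all _ fun ω => mul_nonneg (K_nonneg _) (K_nonneg _)
        · apply Integrable.of_bound (by fun_prop) 1
          refine ae_of_all _ fun p => ?_
          rw [Real.norm_of_nonneg (by positivity)]
          exact exp_sq_le _
        · refine ae_of_all _ fun ω => ?_
          calc K (m * B s ω) * K (m * B t ω) ≤ 1 * Real.exp (-((m * B t ω) ^ 2) / 2) :=
                mul_le_mul ((K_le _).trans (exp_sq_le _)) (K_le _) (K_nonneg _) zero_le_one
            _ = _ := one_mul _
    _ ≤ _ := h1
    _ = _ := by rw [Real.rpow_neg ht.le]; field_simp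

lemma KK_pair {Ω : Type*} [MeasurableSpace Ω] (μ : Measure Ω) [IsProbabilityMeasure μ]
    (H : ℝ) (hH : 0 < H) (hH' : H < 1) (B : ℝ → Ω → ℝ) (hB : IsFBM μ H B) (m s t : ℝ) (hm : 0 < m)
    (ht : 0 < t) (hs : 0 < s) :
    ∫ ω, K (m * B t ω) * K (m * B (t + s) ω) ∂μ ≤
      1 / Real.sqrt ((1 - H) / 4) / m ^ 2 * t ^ (-H) * s ^ (-H) := by
  have mt := hB.meas t
  have mts := hB.meas (t + s)
  have hts : 0 ≤ t + s := by linarith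
  have hdet := det_bound H s t hH hH' hs ht
  have h1H : 0 < (1 - H) / 4 := by linarith
  have hpos : 0 < (1 - H) / 4 * (t ^ (2 * H) * s ^ (2 * H)) := by positivity
  have h1 := gauss_pair μ (B t) (B (t + s)) mt mts (fun c d => by
    obtain ⟨v, hv⟩ := hB.gaussian 2 ![t, t + s] ![c, d] (by
      intro i; fin_cases i
      · exact ht.le
      · exact hts)
    refine ⟨v, ?_⟩
    rw [← hv]; simp [Fin.sum_univ_two]) m _ _ _ hm (hB.cov t t ht.le ht.le)
      (hB.cov t (t + s) ht.le hts) (hB.cov (t + s) (t + s) hts hts)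
      (by rw [RH_self H t hH]; positivity) (hpos.trans_le hdet)
  have hsq : Real.sqrt ((1 - H) / 4) * (t ^ H * s ^ H) ≤
      Real.sqrt (RH H t t * RH H (t + s) (t + s) - RH H t (t + s) ^ 2) := by
    refine le_trans (le_of_eq ?_) (Real.sqrt_le_sqrt hdet)
    rw [Real.sqrt_mul h1H.le, Real.sqrt_mul (by positivity), sqrt_rpow_two_mul H t ht,
      sqrt_rpow_two_mul H s hs]
  calc _ ≤ ∫ ω, Real.exp (-((m * B t ω) ^ 2) / 2) * Real.exp (-((m * B (t + s) ω) ^ 2) / 2) ∂μ := by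
        apply integral_mono_of_nonneg
        · exact ae_of_all _ fun ω => mul_nonneg (K_nonneg _) (K_nonneg _)
        · apply Integrable.of_bound (by fun_prop) 1
          refine ae_of_all _ fun p => ?_
          rw [Real.norm_of_nonneg (by positivity)]
          exact mul_le_one₀ (exp_sq_le _) (by positivity) (exp_sq_le _)
        · refine ae_of_all _ fun ω => ?_
          exact mul_le_mul (K_le _) (K_le _) (K_nonneg _) (by positivity)
    _ ≤ _ := h1
    _ ≤ 1 / (m ^ 2 * (Real.sqrt ((1 - H) / 4) * (t ^ H * s ^ H))) := by
        have : 0 < Real.sqrt ((1 - H) / 4) := Real.sqrt_pos.2 h1H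
        apply one_div_le_one_div_of_le (by positivity)
        exact mul_le_mul_of_nonneg_left hsq (by positivity)
    _ = _ := by
        have : 0 < Real.sqrt ((1 - H) / 4) := Real.sqrt_pos.2 h1H
        rw [Real.rpow_neg ht.le, Real.rpow_neg hs.le]; field_simp

/-- Coefficients `c(0) = 1/m`, `c(l+1) = C/m² (l+1)^{-H}`. -/
noncomputable def cf (C m H : ℝ) : ℕ → ℝ
  | 0 => 1 / m
  | (l + 1) => C / m ^ 2 * ((l : ℝ) + 1) ^ (-H)

lemma cf_nonneg (C m H : ℝ) (hC : 0 ≤ C) (hm : 0 < m) (i : ℕ) : 0 ≤ cf C m H i := by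
  cases i <;> simp only [cf] <;> positivity

lemma term_bound {Ω : Type*} [MeasurableSpace Ω] (μ : Measure Ω) [IsProbabilityMeasure μ]
    (H H₂ : ℝ) (hH : 0 < H) (hH' : H < 1) (hH₂ : 0 < H₂) (hH₂' : H₂ < 1)
    (B : ℝ → Ω → ℝ) (hB : IsFBM μ H B) (m : ℝ) (hm : 0 < m) (i k : ℕ) :
    |(∫ ω, K (m * B (i : ℝ) ω) * K (m * B ((i + (k + 1) : ℕ) : ℝ) ω) ∂μ) * fH H₂ i (i + (k + 1))|
      ≤ cf (1 / Real.sqrt ((1 - H) / 4)) m H i * ((k : ℝ) + 1) ^ (-H + (2 * H₂ - 2)) := by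
  have hk : (0 : ℝ) < (k : ℝ) + 1 := by positivity
  rw [abs_mul, abs_of_nonneg (integral_nonneg fun ω => mul_nonneg (K_nonneg _) (K_nonneg _)),
    Real.rpow_add hk, ← mul_assoc]
  have h1 : 0 ≤ cf (1 / Real.sqrt ((1 - H) / 4)) m H i := cf_nonneg _ _ _ (by positivity) hm i
  refine mul_le_mul ?_ (fH_bound H₂ hH₂ hH₂' i k) (abs_nonneg _) (by positivity)
  cases i with
  | zero =>
    have := KK_zero μ H hH B hB m 0 ((k : ℝ) + 1) hm hk
    simpa [cf] using this
  | succ l =>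
    have := KK_pair μ H hH hH' B hB m ((k : ℝ) + 1) ((l : ℝ) + 1) hm (by positivity) hk
    simpa [cf] using this

lemma half_sum_bound (c w : ℕ → ℝ) (hc : ∀ i, 0 ≤ c i) (hw : ∀ k, 0 ≤ w k) (n : ℕ) :
    ∑ i ∈ Finset.range n, ∑ j ∈ Finset.range n, (if i < j then c i * w (j - i - 1) else 0) ≤
      (∑ i ∈ Finset.range n, c i) * ∑ k ∈ Finset.range n, w k := by
  rw [Finset.sum_mul]
  apply Finset.sum_le_sum
  intro i _
  rw [← Finset.sum_filter, ← Finset.mul_sum]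
  apply mul_le_mul_of_nonneg_left _ (hc i)
  have : (Finset.range n).filter (fun j => i < j) = Finset.Ico (i + 1) n := by
    ext j; simp; omega
  rw [this, Finset.sum_Ico_eq_sum_range]
  have e : ∀ k, i + 1 + k - i - 1 = k := fun k => by omega
  simp_rw [e]
  apply Finset.sum_le_sum_of_subset_of_nonneg
  · intro x; simp; omega
  · intros; exact hw _

lemma full_sum_bound (T : ℕ → ℕ → ℝ) (c w : ℕ → ℝ) (hc : ∀ i, 0 ≤ c i) (hw : ∀ k, 0 ≤ w k)
    (hsym : ∀ i j, T i j = T j i) (hT : ∀ i k, |T i (i + (k + 1))| ≤ c i * w k) (n : ℕ) :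
    |∑ i ∈ Finset.range n, ∑ j ∈ Finset.range n, (if i = j then 0 else T i j)| ≤
      2 * ((∑ i ∈ Finset.range n, c i) * ∑ k ∈ Finset.range n, w k) := by
  have h1 := half_sum_bound c w hc hw n
  have h2 := h1
  rw [Finset.sum_comm] at h2
  have key : ∀ i j, |if i = j then 0 else T i j| ≤
      (if i < j then c i * w (j - i - 1) else 0) + (if j < i then c j * w (i - j - 1) else 0) := by
    intro i j
    rcases lt_trichotomy i j with h | h | h
    · obtain ⟨k, rfl⟩ := Nat.exists_eq_add_of_lt h
      have := hT i k
      rw [if_neg h.ne, if_pos h, if_neg h.not_gt, add_zero]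
      rwa [show i + k + 1 - i - 1 = k by omega]
    · simp [h]
    · obtain ⟨k, rfl⟩ := Nat.exists_eq_add_of_lt h
      have := hT j k
      rw [if_neg h.ne', if_pos h, if_neg h.not_gt, zero_add, hsym]
      rwa [show j + k + 1 - j - 1 = k by omega]
  calc _ ≤ ∑ i ∈ Finset.range n, ∑ j ∈ Finset.range n, |if i = j then 0 else T i j| :=
        (Finset.abs_sum_le_sum_abs _ _).trans
          (Finset.sum_le_sum fun i _ => Finset.abs_sum_le_sum_abs _ _)
    _ ≤ ∑ i ∈ Finset.range n, ∑ j ∈ Finset.range n,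
        ((if i < j then c i * w (j - i - 1) else 0) + (if j < i then c j * w (i - j - 1) else 0)) :=
        Finset.sum_le_sum fun i _ => Finset.sum_le_sum fun j _ => key i j
    _ ≤ _ := by
        simp_rw [Finset.sum_add_distrib]
        linarith

lemma cf_sum (C m H : ℝ) (hC : 0 ≤ C) (hm : 0 < m) (hH : 0 < H) (hH' : H < 1) (n : ℕ) :
    ∑ i ∈ Finset.range n, cf C m H i ≤ 1 / m + C / m ^ 2 * ((n : ℝ) ^ (1 - H) / (1 - H)) := by
  have h1 : ∑ i ∈ Finset.range n, cf C m H i ≤ ∑ i ∈ Finset.range (n + 1), cf C m H i := by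
    rw [Finset.sum_range_succ]; linarith [cf_nonneg C m H hC hm n]
  refine h1.trans ?_
  rw [Finset.sum_range_succ']
  simp only [cf]
  rw [← Finset.mul_sum, add_comm]
  have := sum_rpow_bound (1 - H) (by linarith) (by linarith) n
  rw [show 1 - H - 1 = -H by ring] at this
  have h2 : 0 ≤ C / m ^ 2 := by positivity
  linarith [mul_le_mul_of_nonneg_left this h2]

theorem statement2
    {Ω : Type*} [MeasurableSpace Ω] (μ : Measure Ω) [IsProbabilityMeasure μ]
    (H₁ H₂ α : ℝ) (hH₁ : 0 < H₁) (hH₁' : H₁ < 1) (hH₂ : 0 < H₂) (hH₂' : H₂ < 1)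
    (hα : 0 < α) (hcond : α - 4 * H₂ + H₁ + 2 > 0)
    (B : ℝ → Ω → ℝ) (hB : IsFBM μ H₁ B) :
    Tendsto (fun n : ℕ =>
        (n : ℝ) ^ (α + H₁ - 1) *
          ∑ i ∈ Finset.range n, ∑ j ∈ Finset.range n,
            if i = j then 0 else
              (∫ ω, K ((n : ℝ) ^ α * B i ω) * K ((n : ℝ) ^ α * B j ω) ∂μ) * fH H₂ i j)
      atTop (𝓝 0) := by
  have hlt : max 0 (2 * H₂ - 1 - H₁) < min (1 - H₁) α := by
    rw [max_lt_iff, lt_min_iff, lt_min_iff]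
    refine ⟨⟨by linarith, hα⟩, by linarith, ?_⟩
    rcases le_total H₂ (1 / 2) with h | h <;> linarith
  obtain ⟨δ, hδ1, hδ2⟩ := exists_between hlt
  rw [max_lt_iff] at hδ1
  rw [lt_min_iff] at hδ2
  obtain ⟨hδ0, hδp⟩ := hδ1
  obtain ⟨hδH, hδα⟩ := hδ2
  set C : ℝ := 1 / Real.sqrt ((1 - H₁) / 4) with hCdef
  have hC : 0 ≤ C := by positivity
  have hlim : Tendsto (fun n : ℕ => 2 / δ * ((n : ℝ) ^ (-(1 - H₁ - δ)) +
      C / (1 - H₁) * (n : ℝ) ^ (-(α - δ)))) atTop (𝓝 0) := by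
    have t1 : Tendsto (fun n : ℕ => (n : ℝ) ^ (-(1 - H₁ - δ))) atTop (𝓝 0) :=
      (tendsto_rpow_neg_atTop (by linarith)).comp tendsto_natCast_atTop_atTop
    have t2 : Tendsto (fun n : ℕ => (n : ℝ) ^ (-(α - δ))) atTop (𝓝 0) :=
      (tendsto_rpow_neg_atTop (by linarith)).comp tendsto_natCast_atTop_atTop
    simpa using (t1.add (t2.const_mul (C / (1 - H₁)))).const_mul (2 / δ)
  refine squeeze_zero_norm' ?_ hlim
  filter_upwards [eventually_ge_atTop 1] with n hn
  have hn0 : (0 : ℝ) < n := by exact_mod_cast hn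
  have hm : 0 < (n : ℝ) ^ α := Real.rpow_pos_of_pos hn0 _
  have hb := full_sum_bound
    (fun i j => (∫ ω, K ((n : ℝ) ^ α * B i ω) * K ((n : ℝ) ^ α * B j ω) ∂μ) * fH H₂ i j)
    (cf C ((n : ℝ) ^ α) H₁) (fun k => ((k : ℝ) + 1) ^ (-H₁ + (2 * H₂ - 2)))
    (cf_nonneg _ _ _ hC hm) (fun k => by positivity)
    (fun i j => by
      rw [fH_symm]; congr 2; ext ω; ring)
    (fun i k => term_bound μ H₁ H₂ hH₁ hH₁' hH₂ hH₂' B hB _ hm i k) n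
  have hc := cf_sum C ((n : ℝ) ^ α) H₁ hC hm hH₁ hH₁' n
  have hw : ∑ k ∈ Finset.range n, ((k : ℝ) + 1) ^ (-H₁ + (2 * H₂ - 2)) ≤ (n : ℝ) ^ δ / δ := by
    refine le_trans (Finset.sum_le_sum fun k _ => ?_) (sum_rpow_bound δ hδ0 (by linarith) n)
    exact Real.rpow_le_rpow_of_exponent_le (by linarith [Nat.cast_nonneg (α := ℝ) k]) (by linarith)
  have hw0 : 0 ≤ ∑ k ∈ Finset.range n, ((k : ℝ) + 1) ^ (-H₁ + (2 * H₂ - 2)) :=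
    Finset.sum_nonneg fun k _ => by positivity
  have h1H : 0 < 1 - H₁ := by linarith
  have hc0 : 0 ≤ 1 / (n : ℝ) ^ α + C / ((n : ℝ) ^ α) ^ 2 * ((n : ℝ) ^ (1 - H₁) / (1 - H₁)) := by
    positivity
  rw [norm_mul, Real.norm_eq_abs, Real.norm_eq_abs, abs_of_pos (Real.rpow_pos_of_pos hn0 _)]
  refine (mul_le_mul_of_nonneg_left (hb.trans (mul_le_mul_of_nonneg_left
    (mul_le_mul hc hw hw0 hc0) zero_le_two)) (by positivity)).trans (le_of_eq ?_)
  have e1 : (n : ℝ) ^ (-(1 - H₁ - δ)) =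
      (n : ℝ) ^ (α + H₁ - 1) * (1 / (n : ℝ) ^ α) * (n : ℝ) ^ δ := by
    rw [one_div, ← Real.rpow_neg hn0.le, ← Real.rpow_add hn0, ← Real.rpow_add hn0]
    congr 1; ring
  have e2 : (n : ℝ) ^ (-(α - δ)) =
      (n : ℝ) ^ (α + H₁ - 1) * (1 / ((n : ℝ) ^ α) ^ 2) * (n : ℝ) ^ (1 - H₁) * (n : ℝ) ^ δ := by
    rw [one_div, ← Real.rpow_natCast, ← Real.rpow_mul hn0.le, ← Real.rpow_neg hn0.le,
      ← Real.rpow_add hn0, ← Real.rpow_add hn0, ← Real.rpow_add hn0]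
    congr 1; push_cast; ring
  rw [e1, e2]
  ring
end

section
/- Let (X,Y) be a centered Gaussian random vector in ℝ² with E[X²] = a, E[Y²] = b and E[XY] = ρ, and assume ab − ρ² > 0. Then for every c > 0, E[K(cX) K(cY)] = (2π)^{−1} (c⁴(ab − ρ²) + c²(a + b) + 1)^{−1/2}. -/
open MeasureTheory ProbabilityTheory Real

lemma gauss_shift (v : NNReal) (hv : v ≠ 0) (k m : ℝ) (hk : 0 ≤ k) :
    ∫ z, Real.exp (-(k * (z + m) ^ 2) / 2) ∂(gaussianReal 0 v) =
      (Real.sqrt (1 + k * v))⁻¹ * Real.exp (-(k * m ^ 2) / (2 * (1 + k * v))) := by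
  have hv' : (0 : ℝ) < v := by
    have := pos_iff_ne_zero.2 hv
    exact_mod_cast this
  have h1 : 0 < 1 + k * v := by positivity
  rw [integral_gaussianReal_eq_integral_smul hv]
  have key : ∀ z : ℝ, gaussianPDFReal 0 v z • Real.exp (-(k * (z + m) ^ 2) / 2) =
      ((Real.sqrt (2 * Real.pi * v))⁻¹ * Real.exp (-(k * m ^ 2) / (2 * (1 + k * v)))) *
        Real.exp (-((1 + k * v) / (2 * v)) * (z + k * m * v / (1 + k * v)) ^ 2) := by
    intro z
    rw [gaussianPDFReal_def, smul_eq_mul]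
    simp only []
    rw [mul_assoc (Real.sqrt _)⁻¹, mul_assoc (Real.sqrt _)⁻¹, ← Real.exp_add, ← Real.exp_add]
    congr 2
    field_simp
    ring
  simp_rw [key]
  rw [integral_const_mul,
    integral_add_right_eq_self (fun z : ℝ => Real.exp (-((1 + k * v) / (2 * v)) * z ^ 2)),
    integral_gaussian]
  have : Real.pi / ((1 + k * v) / (2 * v)) = (2 * Real.pi * v) / (1 + k * v) := by
    field_simp
  rw [this, Real.sqrt_div (by positivity)]
  have h2 : Real.sqrt (2 * Real.pi * v) ≠ 0 := by positivity
  have h3 : Real.sqrt (1 + k * v) ≠ 0 := by positivity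
  field_simp

lemma law_facts {Ω : Type*} [MeasurableSpace Ω] (μ : Measure Ω) [IsProbabilityMeasure μ]
    (W : Ω → ℝ) (hW : Measurable W) (v : NNReal) (h : μ.map W = gaussianReal 0 v) :
    MemLp W 2 μ ∧ ∫ ω, W ω ∂μ = 0 ∧ ∫ ω, W ω ^ 2 ∂μ = v := by
  have hG : HasGaussianLaw W μ := ⟨by rw [h]; infer_instance⟩
  have h0 : ∫ ω, W ω ∂μ = 0 := by
    have := integral_map (μ := μ) hW.aemeasurable (f := fun x : ℝ => x) (by fun_prop)
    rw [← this, h, integral_id_gaussianReal]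
  refine ⟨hG.memLp_two, h0, ?_⟩
  rw [← variance_of_integral_eq_zero hW.aemeasurable h0]
  have := variance_map (μ := μ) (X := fun x : ℝ => x) (Y := W) (by fun_prop) hW.aemeasurable
  rw [h, variance_fun_id_gaussianReal] at this
  rw [this]
  rfl

theorem statement7
    {Ω : Type*} [MeasurableSpace Ω] (μ : Measure Ω) [IsProbabilityMeasure μ]
    (X Y : Ω → ℝ) (hX : Measurable X) (hY : Measurable Y)
    (a b ρ : ℝ)
    (hgauss : ∀ u v : ℝ, ∃ σ2 : NNReal,
      μ.map (fun ω => u * X ω + v * Y ω) = gaussianReal 0 σ2)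
    (ha : ∫ ω, X ω ^ 2 ∂μ = a) (hb : ∫ ω, Y ω ^ 2 ∂μ = b)
    (hρ : ∫ ω, X ω * Y ω ∂μ = ρ) (hdet : 0 < a * b - ρ ^ 2) :
    ∀ c : ℝ, 0 < c →
      ∫ ω, K (c * X ω) * K (c * Y ω) ∂μ =
        (2 * Real.pi)⁻¹ *
          (Real.sqrt (c ^ 4 * (a * b - ρ ^ 2) + c ^ 2 * (a + b) + 1))⁻¹ := by
  intro c hc
  have ha0 : 0 < a := by
    have : 0 ≤ a := by rw [← ha]; positivity
    rcases this.lt_or_eq with h | h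
    · exact h
    · rw [← h] at hdet
      nlinarith [sq_nonneg ρ]
  set r : ℝ := -(ρ / a) with hr
  let Z : Ω → ℝ := fun ω => r * X ω + 1 * Y ω
  have hZ : Measurable Z := by fun_prop
  obtain ⟨d, hd⟩ := hgauss r 1
  obtain ⟨α, hα⟩ := hgauss 1 0
  obtain ⟨β, hβ⟩ := hgauss 0 1
  simp only [one_mul, zero_mul, add_zero, zero_add] at hα hβ
  obtain ⟨hX2, hX0, hXa⟩ := law_facts μ X hX α hα
  obtain ⟨hY2, hY0, hYb⟩ := law_facts μ Y hY β hβ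
  obtain ⟨hZ2, hZ0, hZd⟩ := law_facts μ Z hZ d hd
  have hαa : (α : ℝ) = a := by rw [← hXa, ha]
  have iXX : Integrable (fun ω => X ω ^ 2) μ := hX2.integrable_sq
  have iYY : Integrable (fun ω => Y ω ^ 2) μ := hY2.integrable_sq
  have iXY : Integrable (fun ω => X ω * Y ω) μ := hX2.integrable_mul hY2
  have hdv : (d : ℝ) = b - ρ ^ 2 / a := by
    rw [← hZd]
    have : ∀ ω, Z ω ^ 2 = r ^ 2 * X ω ^ 2 + (2 * r) * (X ω * Y ω) + Y ω ^ 2 := by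
      intro ω; simp only [Z]; ring
    simp_rw [this]
    have iS : Integrable (fun ω => r ^ 2 * X ω ^ 2 + (2 * r) * (X ω * Y ω)) μ :=
      (iXX.const_mul _).add (iXY.const_mul _)
    rw [integral_add iS iYY,
      integral_add (iXX.const_mul _) (iXY.const_mul _), integral_const_mul, integral_const_mul,
      ha, hb, hρ, hr]
    field_simp
    ring
  have hd0 : (0 : ℝ) < d := by
    rw [hdv]
    have : b - ρ ^ 2 / a = (a * b - ρ ^ 2) / a := by field_simp
    rw [this]; positivity
  have hdne : d ≠ 0 := by rintro rfl; simp at hd0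
  have hαne : α ≠ 0 := by rintro rfl; simp at hαa; linarith
  -- joint Gaussianity of (X, Z)
  have hXZ : HasGaussianLaw (fun ω => (X ω, Z ω)) μ := by
    constructor
    constructor
    intro L
    have hm : Measurable (fun ω => (X ω, Z ω)) := by fun_prop
    have hL : ∀ p : ℝ × ℝ, L p = p.1 * L (1, 0) + p.2 * L (0, 1) := by
      intro p
      have : p = p.1 • ((1, 0) : ℝ × ℝ) + p.2 • ((0, 1) : ℝ × ℝ) := by ext <;> simp
      conv_lhs => rw [this]
      rw [map_add, map_smul, map_smul, smul_eq_mul, smul_eq_mul]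
    obtain ⟨s, hs⟩ := hgauss (L (1, 0) + r * L (0, 1)) (L (0, 1))
    have e : (L ∘ fun ω => (X ω, Z ω)) =
        fun ω => (L (1, 0) + r * L (0, 1)) * X ω + L (0, 1) * Y ω := by
      funext ω
      simp only [Function.comp]
      rw [hL]
      simp only [Z]
      ring
    have hmap : (μ.map (fun ω => (X ω, Z ω))).map L = gaussianReal 0 s := by
      rw [Measure.map_map (by fun_prop) hm, e, hs]
    have : IsProbabilityMeasure (μ.map (fun ω => (X ω, Z ω))) :=
      Measure.isProbabilityMeasure_map hm.aemeasurable
    obtain ⟨_, q0, q2⟩ := law_facts (μ.map (fun ω => (X ω, Z ω))) L (by fun_prop) s hmap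
    rw [hmap, variance_of_integral_eq_zero (by fun_prop) q0, q0, q2, Real.toNNReal_coe]
  have hcov : cov[X, Z; μ] = 0 := by
    rw [covariance_eq_sub hX2 hZ2, hX0, zero_mul, sub_zero]
    have : ∀ ω, (X * Z) ω = r * X ω ^ 2 + X ω * Y ω := by
      intro ω; simp only [Z, Pi.mul_apply]; ring
    simp_rw [this]
    rw [integral_add (iXX.const_mul _) iXY, integral_const_mul, ha, hρ, hr]
    field_simp
    ring
  have hind : IndepFun X Z μ := hXZ.indepFun_of_covariance_eq_zero hcov
  have hprod := (indepFun_iff_map_prod_eq_prod_map_map hX.aemeasurable hZ.aemeasurable).1 hind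
  have hd' : μ.map Z = gaussianReal 0 d := hd
  rw [hα, hd'] at hprod
  let F : ℝ × ℝ → ℝ := fun p =>
    Real.exp (-(c ^ 2 * (p.1 + 0) ^ 2) / 2) * Real.exp (-(c ^ 2 * (p.2 + -r * p.1) ^ 2) / 2)
  have hF : Continuous F := by fun_prop
  have e1 : ∀ ω, K (c * X ω) * K (c * Y ω) = (2 * Real.pi)⁻¹ * F (X ω, Z ω) := by
    intro ω
    have hs : (2 * Real.pi)⁻¹ = (Real.sqrt (2 * Real.pi))⁻¹ * (Real.sqrt (2 * Real.pi))⁻¹ := by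
      rw [← mul_inv, Real.mul_self_sqrt (by positivity)]
    have e2 : Z ω + -r * X ω = Y ω := by simp only [Z]; ring
    simp only [F, K, hs, e2, add_zero, mul_pow]
    ring
  simp_rw [e1]
  rw [integral_const_mul]
  congr 1
  have hm : Measurable (fun ω => (X ω, Z ω)) := by fun_prop
  rw [← integral_map (f := F) hm.aemeasurable hF.aestronglyMeasurable, hprod]
  have hFi : Integrable F ((gaussianReal 0 α).prod (gaussianReal 0 d)) := by
    refine Integrable.of_bound hF.aestronglyMeasurable 1 (Filter.Eventually.of_forall ?_)
    intro p
    rw [Real.norm_of_nonneg (by positivity)]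
    simp only [F]
    rw [← Real.exp_add]
    apply Real.exp_le_one_iff.2
    have := mul_nonneg (sq_nonneg c) (sq_nonneg (p.1 + 0))
    have := mul_nonneg (sq_nonneg c) (sq_nonneg (p.2 + -r * p.1))
    linarith
  rw [integral_prod F hFi]
  simp only [F]
  have hD : 0 < 1 + c ^ 2 * (d : ℝ) := by positivity
  simp_rw [integral_const_mul, gauss_shift d hdne (c ^ 2) _ (by positivity)]
  set k : ℝ := c ^ 2 + c ^ 2 * r ^ 2 / (1 + c ^ 2 * d) with hk
  have hk0 : 0 ≤ k := by positivity
  have e3 : ∀ x : ℝ, Real.exp (-(c ^ 2 * (x + 0) ^ 2) / 2) * ((Real.sqrt (1 + c ^ 2 * d))⁻¹ *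
      Real.exp (-(c ^ 2 * (-r * x) ^ 2) / (2 * (1 + c ^ 2 * d)))) =
      (Real.sqrt (1 + c ^ 2 * d))⁻¹ * Real.exp (-(k * (x + 0) ^ 2) / 2) := by
    intro x
    rw [mul_left_comm, ← Real.exp_add]
    congr 2
    rw [hk]
    field_simp
    ring
  simp_rw [e3]
  rw [integral_const_mul, gauss_shift α hαne k 0 hk0]
  simp only [ne_eq, OfNat.ofNat_ne_zero, not_false_eq_true, zero_pow, mul_zero, neg_zero, zero_div,
    Real.exp_zero, mul_one]
  rw [← mul_inv, ← Real.sqrt_mul hD.le]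
  congr 2
  have e4 : (1 + c ^ 2 * (d : ℝ)) * (1 + k * α) =
      (1 + c ^ 2 * d) * (1 + c ^ 2 * α) + c ^ 2 * r ^ 2 * α := by
    rw [hk]; field_simp; ring
  rw [e4, hdv, hαa, hr]
  field_simp
  ring
end

section
/- Let 1/2 < H < 1. There exists a constant c(H) > 0, depending only on H, such that for every integer m ≥ 1 and every integer n ≥ 2, n^{−2} Σ_{1≤j<i≤n−1} R_H(i/n, j/n)^{2m} (i/n)^{−H(2m+1)} (j/n)^{−H(2m+1)} ≤ c(H) m^{−1/(2H)}. -/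
open MeasureTheory Filter Topology Real

theorem aux_sum (p : ℝ) (hp : 0 < p) (hp1 : p ≤ 1) (k : ℕ) :
    ∑ j ∈ Finset.Ico 1 (k + 1), (j : ℝ) ^ (p - 1) ≤ (k : ℝ) ^ p / p := by
  induction k with
  | zero => simp [Real.zero_rpow hp.ne']
  | succ k ih =>
    rw [Finset.sum_Ico_succ_top (by omega)]
    have hk : (0 : ℝ) < (k : ℝ) + 1 := by positivity
    have h1 := rpow_one_add_le_one_add_mul_self (s := -1 / ((k : ℝ) + 1)) (p := p)
      (by rw [le_div_iff₀ hk]; linarith [(Nat.cast_nonneg k : (0 : ℝ) ≤ k)]) hp.le hp1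
    have h2 : (1 : ℝ) + -1 / ((k : ℝ) + 1) = k / (k + 1) := by field_simp; ring
    rw [h2, Real.div_rpow (by positivity) hk.le, div_le_iff₀ (by positivity)] at h1
    have h3 : ((k : ℝ) + 1) ^ (p - 1) = ((k : ℝ) + 1) ^ p / (k + 1) := by
      rw [Real.rpow_sub hk, Real.rpow_one]
    push_cast
    rw [le_div_iff₀ hp] at ih ⊢
    rw [add_mul, h3]
    have h4 : (1 + p * (-1 / ((k : ℝ) + 1))) * ((k : ℝ) + 1) ^ p
      = ((k : ℝ) + 1) ^ p - ((k : ℝ) + 1) ^ p / (k + 1) * p := by field_simp; ring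
    linarith

theorem aux_sum' (p : ℝ) (hp : 0 < p) (hp1 : p ≤ 1) (i : ℕ) (hi : 1 ≤ i) :
    ∑ j ∈ Finset.Ico 1 i, (j : ℝ) ^ (p - 1) ≤ (i : ℝ) ^ p / p := by
  obtain ⟨k, rfl⟩ : ∃ k, i = k + 1 := ⟨i - 1, by omega⟩
  refine (aux_sum p hp hp1 k).trans ?_
  gcongr
  simp

theorem aux_exp (a : ℝ) (ha : 0 < a) (k : ℕ) :
    ∑ j ∈ Finset.Ico 1 (k + 1), Real.exp (-(a * (((k + 1 : ℕ) : ℝ) - j))) ≤ 1 / a := by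
  induction k with
  | zero => simp [ha.le]
  | succ k ih =>
    rw [Finset.sum_Ico_succ_top (by omega)]
    have h1 : ∀ j ∈ Finset.Ico 1 (k + 1), Real.exp (-(a * (((k + 1 + 1 : ℕ) : ℝ) - j)))
        = Real.exp (-a) * Real.exp (-(a * (((k + 1 : ℕ) : ℝ) - j))) := by
      intro j _
      rw [← Real.exp_add]
      congr 1
      push_cast
      ring
    rw [Finset.sum_congr rfl h1, ← Finset.mul_sum]
    have h2 : -(a * (((k + 1 + 1 : ℕ) : ℝ) - ((k + 1 : ℕ) : ℝ))) = -a := by push_cast; ring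
    rw [h2]
    have h3 : Real.exp (-a) * (1 / a + 1) ≤ 1 / a := by
      rw [Real.exp_neg, inv_mul_le_iff₀ (Real.exp_pos a)]
      have := Real.add_one_le_exp a
      have e : 1 / a + 1 = (a + 1) * (1 / a) := by field_simp; ring
      rw [e]
      gcongr
    have h4 := mul_le_mul_of_nonneg_left ih (Real.exp_pos (-a)).le
    linarith

theorem aux_ab (H : ℝ) (hH : 1 / 2 < H) (hH' : H < 1) (x : ℝ) (hx : 0 < x) (hx1 : x ≤ 1 / 2) :
    (1 - 2 ^ (H - 1)) * (x ^ H * (1 - x) ^ H) ≤ x ^ H + (1 - x) ^ H - 1 := by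
  have h1 : (1 - x) ≤ (1 - x) ^ H := by
    simpa using Real.rpow_le_rpow_of_exponent_ge (by linarith : 0 < 1 - x) (by linarith) hH'.le
  have h2 : (1 - x) ^ H ≤ 1 := Real.rpow_le_one (by linarith) (by linarith) (by linarith)
  have h3 : x = x ^ H * x ^ (1 - H) := by rw [← Real.rpow_add hx]; simp
  have h4 : x ^ (1 - H) ≤ 2 ^ (H - 1) := by
    have : (2 : ℝ) ^ (H - 1) = (1 / 2) ^ (1 - H) := by
      rw [one_div, Real.inv_rpow (by norm_num), ← Real.rpow_neg (by norm_num)]; congr 1; ring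
    rw [this]
    exact Real.rpow_le_rpow hx.le hx1 (by linarith)
  have h5 : (2 : ℝ) ^ (H - 1) ≤ 1 :=
    Real.rpow_le_one_of_one_le_of_nonpos (by norm_num) (by linarith)
  have h6 : 0 < x ^ H := by positivity
  have h7 : (1 - 2 ^ (H - 1)) * (x ^ H * (1 - x) ^ H) ≤ (1 - 2 ^ (H - 1)) * (x ^ H * 1) := by
    have : (0 : ℝ) ≤ 1 - 2 ^ (H - 1) := by linarith
    gcongr
  have h8 := mul_le_mul_of_nonneg_left h4 h6.le
  nlinarith

theorem aux_ab' (H : ℝ) (hH : 1 / 2 < H) (hH' : H < 1) (x : ℝ) (hx : 0 < x) (hx1 : x < 1) :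
    (1 - 2 ^ (H - 1)) * (x ^ H * (1 - x) ^ H) ≤ x ^ H + (1 - x) ^ H - 1 := by
  rcases le_total x (1 / 2) with h | h
  · exact aux_ab H hH hH' x hx h
  · have := aux_ab H hH hH' (1 - x) (by linarith) (by linarith)
    rw [sub_sub_cancel] at this
    linarith

theorem aux_rho (H : ℝ) (hH : 1 / 2 < H) (hH' : H < 1) (x : ℝ) (hx : 0 < x) (hx1 : x < 1) :
    x ^ (2 * H) + 1 - (1 - x) ^ (2 * H) ≤
      2 * x ^ H * (1 - (1 - 2 ^ (H - 1)) / 2 * (1 - x) ^ (2 * H)) := by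
  have h0 := aux_ab' H hH hH' x hx hx1
  have hy : 0 < 1 - x := by linarith
  have e1 : x ^ (2 * H) = (x ^ H) ^ 2 := by
    rw [mul_comm, Real.rpow_mul hx.le]; norm_num
  have e2 : (1 - x) ^ (2 * H) = ((1 - x) ^ H) ^ 2 := by
    rw [mul_comm, Real.rpow_mul hy.le]; norm_num
  rw [e1, e2]
  have h5 : (2 : ℝ) ^ (H - 1) ≤ 1 :=
    Real.rpow_le_one_of_one_le_of_nonpos (by norm_num) (by linarith)
  have ha : 0 < x ^ H := by positivity
  have hb : 0 < (1 - x) ^ H := by positivity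
  have ha1 : x ^ H ≤ 1 := Real.rpow_le_one hx.le hx1.le (by linarith)
  generalize x ^ H = a at *
  generalize (1 - x) ^ H = b at *
  generalize (2 : ℝ) ^ (H - 1) = d at *
  have hp : 0 ≤ (1 - d) * (a * b) := by
    have : 0 ≤ 1 - d := by linarith
    positivity
  have h9 : (1 - d) * (a * b) * b ≤ (a + b - 1) * (b + 1 - a) := by
    apply mul_le_mul h0 (by linarith) hb.le (by linarith)
  nlinarith

theorem aux_R (H : ℝ) (hH : 1 / 2 < H) (hH' : H < 1) (t s : ℝ) (hs : 0 < s) (hst : s < t) :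
    0 ≤ RH H t s ∧ RH H t s ≤
      t ^ H * s ^ H * (1 - (1 - 2 ^ (H - 1)) / 2 * (1 - s / t) ^ (2 * H)) := by
  have ht : 0 < t := hs.trans hst
  have hx : 0 < s / t := by positivity
  have hx1 : s / t < 1 := by rw [div_lt_one ht]; exact hst
  have h := aux_rho H hH hH' (s / t) hx hx1
  have hy : (1 - s / t) ^ (2 * H) ≤ 1 := Real.rpow_le_one (by linarith) (by linarith) (by linarith)
  have e : RH H t s = t ^ (2 * H) *
      ((s / t) ^ (2 * H) + 1 - (1 - s / t) ^ (2 * H)) / 2 := by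
    have e1 : |t - s| = t * (1 - s / t) := by
      rw [abs_of_pos (by linarith)]; field_simp
    unfold RH
    rw [e1, Real.mul_rpow ht.le (by linarith), Real.div_rpow hs.le ht.le]
    field_simp
    ring
  have hp : 0 < t ^ (2 * H) := by positivity
  constructor
  · rw [e]
    have : 0 ≤ (s / t) ^ (2 * H) + 1 - (1 - s / t) ^ (2 * H) := by
      have : 0 < (s / t) ^ (2 * H) := by positivity
      linarith
    positivity
  · rw [e]
    have h2 := mul_le_mul_of_nonneg_left h hp.le
    have e3 : t ^ (2 * H) * (s / t) ^ H = t ^ H * s ^ H := by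
      rw [Real.div_rpow hs.le ht.le, two_mul, Real.rpow_add ht]; field_simp
    rw [← e3]
    linarith

theorem aux_term (H : ℝ) (hH : 1 / 2 < H) (hH' : H < 1) (t s d : ℝ) (hs : 0 < s) (hst : s < t)
    (hd : d = (1 - 2 ^ (H - 1)) / 2) (hd0 : 0 < d) (m : ℕ) :
    RH H t s ^ (2 * m) * t ^ (-(H * (2 * (m : ℝ) + 1))) * s ^ (-(H * (2 * (m : ℝ) + 1))) ≤
      t ^ (-H) * s ^ (-H) * (Real.exp (2 * d) *
        Real.exp (-(2 * d * ((m : ℝ) ^ (1 / (2 * H)) * (1 - s / t))))) := by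
  have ht : 0 < t := hs.trans hst
  obtain ⟨h0, h1⟩ := aux_R H hH hH' t s hs hst
  rw [← hd] at h1
  have hx1 : s / t < 1 := by rw [div_lt_one ht]; exact hst
  have hy : 0 < 1 - s / t := by linarith
  set y := 1 - s / t with hyd
  have h2 : RH H t s ≤ t ^ H * s ^ H * Real.exp (-(d * y ^ (2 * H))) := by
    refine h1.trans ?_
    gcongr
    have := Real.add_one_le_exp (-(d * y ^ (2 * H)))
    linarith
  have h3 := pow_le_pow_left₀ h0 h2 (2 * m)
  have key : ∀ u : ℝ, 0 < u → (u ^ H) ^ (2 * m) * u ^ (-(H * (2 * (m : ℝ) + 1))) = u ^ (-H) := by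
    intro u hu
    rw [← Real.rpow_natCast, ← Real.rpow_mul hu.le, ← Real.rpow_add hu]
    congr 1
    push_cast
    ring
  have hz : (m : ℝ) ^ (1 / (2 * H)) * y - 1 ≤ m * y ^ (2 * H) := by
    have e : (m : ℝ) * y ^ (2 * H) = ((m : ℝ) ^ (1 / (2 * H)) * y) ^ (2 * H) := by
      rw [Real.mul_rpow (by positivity) hy.le, ← Real.rpow_mul (by positivity)]
      rw [one_div_mul_cancel (by linarith), Real.rpow_one]
    rw [e]
    have hw : 0 ≤ (m : ℝ) ^ (1 / (2 * H)) * y := by positivity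
    generalize (m : ℝ) ^ (1 / (2 * H)) * y = w at hw
    rcases le_total w 1 with h | h
    · have : 0 ≤ w ^ (2 * H) := by positivity
      linarith
    · have : w ^ (1 : ℝ) ≤ w ^ (2 * H) := Real.rpow_le_rpow_of_exponent_le h (by linarith)
      rw [Real.rpow_one] at this
      linarith
  calc _ ≤ (t ^ H * s ^ H * Real.exp (-(d * y ^ (2 * H)))) ^ (2 * m) *
        t ^ (-(H * (2 * (m : ℝ) + 1))) * s ^ (-(H * (2 * (m : ℝ) + 1))) := by gcongr
    _ = ((t ^ H) ^ (2 * m) * t ^ (-(H * (2 * (m : ℝ) + 1)))) *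
        ((s ^ H) ^ (2 * m) * s ^ (-(H * (2 * (m : ℝ) + 1)))) *
        Real.exp (-(d * y ^ (2 * H))) ^ (2 * m) := by rw [mul_pow, mul_pow]; ring
    _ ≤ _ := by
      rw [key t ht, key s hs, ← Real.exp_nat_mul, ← Real.exp_add]
      gcongr
      push_cast
      nlinarith

theorem aux_inner (H : ℝ) (hH : 1 / 2 < H) (hH' : H < 1) (d u : ℝ) (hd0 : 0 < d) (hu : 0 < u)
    (i : ℕ) (hi : 1 ≤ i) :
    ∑ j ∈ Finset.Ico 1 i, (j : ℝ) ^ (-H) * Real.exp (-(2 * d * (u * (1 - (j : ℝ) / i)))) ≤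
      (2 ^ H / (2 * d) + 1 / ((1 - H) * d)) * u⁻¹ * (i : ℝ) ^ (1 - H) := by
  have hi0 : (0 : ℝ) < i := by exact_mod_cast hi
  have hH1 : 0 < 1 - H := by linarith
  have hb : ∀ j ∈ Finset.Ico 1 i,
      (j : ℝ) ^ (-H) * Real.exp (-(2 * d * (u * (1 - (j : ℝ) / i)))) ≤
      2 ^ H * (i : ℝ) ^ (-H) * Real.exp (-(2 * d * u / i * ((i : ℝ) - j))) +
        (d * u)⁻¹ * (j : ℝ) ^ (1 - H - 1) := by
    intro j hj
    rw [Finset.mem_Ico] at hj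
    have hj0 : (0 : ℝ) < j := by exact_mod_cast hj.1
    have e : 2 * d * u / i * ((i : ℝ) - j) = 2 * d * (u * (1 - (j : ℝ) / i)) := by field_simp
    have e2 : (1 - H - 1) = -H := by ring
    rw [e, e2]
    rcases le_total (i : ℝ) (2 * j) with h | h
    · have h1 : (j : ℝ) ^ (-H) ≤ 2 ^ H * (i : ℝ) ^ (-H) := by
        rw [Real.rpow_neg hj0.le, Real.rpow_neg hi0.le, ← div_eq_mul_inv, inv_eq_one_div,
          div_le_div_iff₀ (by positivity) (by positivity), one_mul,
          ← Real.mul_rpow (by norm_num) hj0.le]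
        exact Real.rpow_le_rpow hi0.le h (by linarith)
      have h2 : 0 ≤ (d * u)⁻¹ * (j : ℝ) ^ (-H) := by positivity
      have h3 := mul_le_mul_of_nonneg_right h1
        (Real.exp_pos (-(2 * d * (u * (1 - (j : ℝ) / i))))).le
      linarith
    · have h1 : (1 : ℝ) / 2 ≤ 1 - (j : ℝ) / i := by
        have : (j : ℝ) / i ≤ 1 / 2 := by rw [div_le_iff₀ hi0]; linarith
        linarith
      have h2 : d * u ≤ 2 * d * (u * (1 - (j : ℝ) / i)) := by
        have := mul_le_mul_of_nonneg_left h1 (by positivity : 0 ≤ 2 * d * u)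
        linarith
      have h3 : Real.exp (-(2 * d * (u * (1 - (j : ℝ) / i)))) ≤ (d * u)⁻¹ := by
        rw [Real.exp_neg]
        apply inv_anti₀ (by positivity)
        have := Real.add_one_le_exp (2 * d * (u * (1 - (j : ℝ) / i)))
        linarith
      have h4 : 0 ≤ 2 ^ H * (i : ℝ) ^ (-H) * Real.exp (-(2 * d * (u * (1 - (j : ℝ) / i)))) := by
        positivity
      have h5 := mul_le_mul_of_nonneg_left h3 (by positivity : 0 ≤ (j : ℝ) ^ (-H))
      linarith
  refine (Finset.sum_le_sum hb).trans ?_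
  rw [Finset.sum_add_distrib, ← Finset.mul_sum, ← Finset.mul_sum]
  have s1 := aux_sum' (1 - H) hH1 (by linarith) i hi
  have s2 : ∑ j ∈ Finset.Ico 1 i, Real.exp (-(2 * d * u / i * ((i : ℝ) - j))) ≤
      1 / (2 * d * u / i) := by
    obtain ⟨k, rfl⟩ : ∃ k, i = k + 1 := ⟨i - 1, by omega⟩
    exact aux_exp _ (by positivity) k
  have e : (i : ℝ) ^ (1 - H) = (i : ℝ) ^ (-H) * i := by
    rw [← Real.rpow_add_one hi0.ne']; congr 1; ring
  calc _ ≤ 2 ^ H * (i : ℝ) ^ (-H) * (1 / (2 * d * u / i)) +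
        (d * u)⁻¹ * ((i : ℝ) ^ (1 - H) / (1 - H)) := by gcongr
    _ = _ := by rw [e]; field_simp

theorem statement13 (H : ℝ) (hH : 1 / 2 < H) (hH' : H < 1) :
    ∃ c : ℝ, 0 < c ∧ ∀ m n : ℕ, 1 ≤ m → 2 ≤ n →
      ((n : ℝ) ^ 2)⁻¹ *
          ∑ i ∈ Finset.Ico 1 n, ∑ j ∈ Finset.Ico 1 i,
            RH H ((i : ℝ) / n) ((j : ℝ) / n) ^ (2 * m) *
              ((i : ℝ) / n) ^ (-(H * (2 * (m : ℝ) + 1))) *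
              ((j : ℝ) / n) ^ (-(H * (2 * (m : ℝ) + 1))) ≤
        c * (m : ℝ) ^ (-(1 / (2 * H))) := by
  obtain ⟨d, hd⟩ : ∃ d : ℝ, d = (1 - 2 ^ (H - 1)) / 2 := ⟨_, rfl⟩
  have hd0 : 0 < d := by
    have : (2 : ℝ) ^ (H - 1) < 1 := Real.rpow_lt_one_of_one_lt_of_neg (by norm_num) (by linarith)
    rw [hd]; linarith
  have hH1 : 0 < 1 - H := by linarith
  have hH2 : 0 < 2 - 2 * H := by linarith
  obtain ⟨K, hK⟩ : ∃ K : ℝ, K = 2 ^ H / (2 * d) + 1 / ((1 - H) * d) := ⟨_, rfl⟩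
  have hK0 : 0 < K := by rw [hK]; positivity
  refine ⟨Real.exp (2 * d) * K / (2 - 2 * H), by positivity, ?_⟩
  intro m n hm hn
  have hm0 : (0 : ℝ) < m := by exact_mod_cast hm
  have hn0 : (0 : ℝ) < n := by exact_mod_cast (by omega : 0 < n)
  rw [Real.rpow_neg hm0.le]
  have hu : 0 < (m : ℝ) ^ (1 / (2 * H)) := by positivity
  obtain ⟨u, hue⟩ : ∃ u : ℝ, u = (m : ℝ) ^ (1 / (2 * H)) := ⟨_, rfl⟩
  rw [← hue] at hu ⊢
  have hin : ∀ i ∈ Finset.Ico 1 n, ∑ j ∈ Finset.Ico 1 i,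
            RH H ((i : ℝ) / n) ((j : ℝ) / n) ^ (2 * m) *
              ((i : ℝ) / n) ^ (-(H * (2 * (m : ℝ) + 1))) *
              ((j : ℝ) / n) ^ (-(H * (2 * (m : ℝ) + 1))) ≤
        (n : ℝ) ^ (2 * H) * Real.exp (2 * d) * K * u⁻¹ * (i : ℝ) ^ (2 - 2 * H - 1) := by
    intro i hi
    rw [Finset.mem_Ico] at hi
    have hi0 : (0 : ℝ) < i := by exact_mod_cast hi.1
    have hsc : ∀ x : ℝ, 0 < x → (x / n) ^ (-H) = x ^ (-H) * (n : ℝ) ^ H := by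
      intro x hx
      rw [Real.div_rpow hx.le hn0.le, Real.rpow_neg hn0.le, div_inv_eq_mul]
    have ht : ∀ j ∈ Finset.Ico 1 i, RH H ((i : ℝ) / n) ((j : ℝ) / n) ^ (2 * m) *
              ((i : ℝ) / n) ^ (-(H * (2 * (m : ℝ) + 1))) *
              ((j : ℝ) / n) ^ (-(H * (2 * (m : ℝ) + 1))) ≤
        ((n : ℝ) ^ (2 * H) * Real.exp (2 * d) * (i : ℝ) ^ (-H)) *
          ((j : ℝ) ^ (-H) * Real.exp (-(2 * d * (u * (1 - (j : ℝ) / i))))) := by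
      intro j hj
      rw [Finset.mem_Ico] at hj
      have hj0 : (0 : ℝ) < j := by exact_mod_cast hj.1
      have hji : (j : ℝ) < i := by exact_mod_cast hj.2
      refine (aux_term H hH hH' (i / n) (j / n) d (by positivity) (by gcongr) hd hd0 m).trans ?_
      rw [← hue, hsc _ hi0, hsc _ hj0, div_div_div_cancel_right₀ hn0.ne', two_mul H,
        Real.rpow_add hn0]
      apply le_of_eq
      ring
    refine (Finset.sum_le_sum ht).trans ?_
    rw [← Finset.mul_sum]
    have h := aux_inner H hH hH' d u hd0 hu i hi.1
    rw [← hK] at h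
    have e : (i : ℝ) ^ (2 - 2 * H - 1) = (i : ℝ) ^ (-H) * (i : ℝ) ^ (1 - H) := by
      rw [← Real.rpow_add hi0]; congr 1; ring
    rw [e]
    refine (mul_le_mul_of_nonneg_left h (by positivity)).trans (le_of_eq ?_)
    ring
  have hs := Finset.sum_le_sum hin
  rw [← Finset.mul_sum] at hs
  have h2 := aux_sum' (2 - 2 * H) hH2 (by linarith) n (by omega)
  have e : (n : ℝ) ^ (2 * H) * (n : ℝ) ^ (2 - 2 * H) = (n : ℝ) ^ 2 := by
    rw [← Real.rpow_add hn0, ← Real.rpow_natCast]; congr 1; push_cast; ring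
  rw [inv_mul_le_iff₀ (by positivity), ← e]
  refine hs.trans ((mul_le_mul_of_nonneg_left h2 (by positivity)).trans (le_of_eq ?_))
  ring
end
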